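/- The function u(x,y) = x·tanh(y) + sech(y) (where sech(y) = 1/cosh(y)) satisfies the partial differential equation ∂u/∂y + u·∂u/∂x = x at every point (x,y) ∈ ℝ², together with the initial condition u(x,0) = 1 for every x ∈ ℝ. Concretely: for all x, y ∈ ℝ, (x·sech(y)² − sech(y)·tanh(y)) + (x·tanh(y) + sech(y))·tanh(y) = x, where x·sech(y)² − sech(y)·tanh(y) is the derivative of y ↦ x·tanh(y) + sech(y) and tanh(y) is the derivative of x ↦ x·tanh(y) + sech(y). -/

import Mathlib

open Real

/-- The function `u(x,y) = x·tanh y + sech y` solves `∂u/∂y + u·∂u/∂x = x`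
with initial condition `u(x,0) = 1`. -/
theorem stmt_0 :
    (∀ x y : ℝ,
      HasDerivAt (fun y' : ℝ => x * Real.tanh y' + 1 / Real.cosh y')
        (x * (1 / Real.cosh y) ^ 2 - (1 / Real.cosh y) * Real.tanh y) y ∧
      HasDerivAt (fun x' : ℝ => x' * Real.tanh y + 1 / Real.cosh y) (Real.tanh y) x ∧
      (x * (1 / Real.cosh y) ^ 2 - (1 / Real.cosh y) * Real.tanh y) +
        (x * Real.tanh y + 1 / Real.cosh y) * Real.tanh y = x) ∧
    (∀ x : ℝ, x * Real.tanh 0 + 1 / Real.cosh 0 = 1) := by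
  refine ⟨fun x y => ?_, fun x => by simp⟩
  have hc : Real.cosh y ≠ 0 := (Real.cosh_pos y).ne'
  have hsq : Real.cosh y ^ 2 = Real.sinh y ^ 2 + 1 := Real.cosh_sq y
  refine ⟨?_, ?_, ?_⟩
  · simp only [Real.tanh_eq_sinh_div_cosh]
    have h1 := ((Real.hasDerivAt_sinh y).div (Real.hasDerivAt_cosh y) hc).const_mul x
    have h2 := (hasDerivAt_const y (1 : ℝ)).div (Real.hasDerivAt_cosh y) hc
    refine (h1.add h2).congr_deriv ?_
    field_simp
    linear_combination x * hsq
  · simpa using ((hasDerivAt_id x).mul_const (Real.tanh y)).add_const (1 / Real.cosh y)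
  · rw [Real.tanh_eq_sinh_div_cosh]
    field_simp
    linear_combination (-x) * hsq
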